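/- arXiv:2408.06616 — 2 statements merged into one kernel-verified Lean document; each statement's English description precedes it below -/
import Mathlib

section
/- Suppose Φ satisfies the WDVV equation and there is a distinguished index 0 in ι with Φ 0 i j = g i j for all i, j. Then the free K-module K^ι equipped with the quantum product * is a commutative, associative K-algebra with multiplicative identity T_0. -/
/-!
Contracting the WDVV equation with `g'` turns it into `(T i * T j) * T k = (T i * T k) * T j`.
For a commutative product this is associativity: `(x * y) * z = (y * x) * z = (y * z) * x`. The
vector `T i₀` is a unit because `T i₀ * T j` is the `j`-th row of `g * g' = 1`.
-/

open Finset

section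

open Matrix Module

lemma bilin_right_comm_of_basis {R M ι : Type*} [CommSemiring R] [AddCommMonoid M] [Module R M]
    (b : Basis ι R M) (B : M →ₗ[R] M →ₗ[R] M)
    (h : ∀ i j k, B (B (b i) (b j)) (b k) = B (B (b i) (b k)) (b j)) (x y z : M) :
    B (B x y) z = B (B x z) y := by
  have trilinear_eq : B.compr₂ B = (LinearMap.lflip (R₀ := R)).toLinearMap ∘ₗ B.compr₂ B :=
    LinearMap.ext_basis b b fun i j => b.ext fun k => h i j k
  exact LinearMap.congr_fun (LinearMap.congr_fun₂ trilinear_eq x y) z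

variable {K ι : Type*} [CommSemiring K] [Fintype ι]

/-- The WDVV equation for a potential with third derivatives `Φ` and inverse metric `g'`. -/
def SatisfiesWDVV (Φ : ι → ι → ι → K) (g' : ι → ι → K) : Prop :=
  ∀ i j k l,
    (∑ e, ∑ f, Φ i j e * g' e f * Φ f k l) = ∑ e, ∑ f, Φ i k e * g' e f * Φ f j l

lemma SatisfiesWDVV.vecMul_vecMul_comm {Φ : ι → ι → ι → K} {g' : ι → ι → K}
    (h : SatisfiesWDVV Φ g') (i j k : ι) :
    (Φ i j ᵥ* of g') ᵥ* of (fun f l => Φ f k l) =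
      (Φ i k ᵥ* of g') ᵥ* of (fun f l => Φ f j l) := by
  have sum_eq (j k l : ι) : ((Φ i j ᵥ* of g') ᵥ* of (fun f l => Φ f k l)) l =
      ∑ e, ∑ f, Φ i j e * g' e f * Φ f k l := by
    simp only [vecMul, dotProduct, of_apply, sum_mul]
    exact sum_comm
  ext l
  rw [sum_eq, sum_eq, h i j k l]

/-- The quantum product on `K^ι`, as a bilinear map. The vector `Φ i j ᵥ* of g'` is
`T i * T j = ∑ e f, Φ i j e * g' e f • T f` for the standard basis `T i = Pi.single i 1`. -/
noncomputable def quantumMul (Φ : ι → ι → ι → K) (g' : ι → ι → K) :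
    (ι → K) →ₗ[K] (ι → K) →ₗ[K] (ι → K) :=
  (Pi.basisFun K ι).constr K fun i => (Pi.basisFun K ι).constr K fun j => Φ i j ᵥ* of g'

variable {Φ : ι → ι → ι → K} {g' : ι → ι → K}

lemma quantumMul_apply (x y : ι → K) (p : ι) :
    quantumMul Φ g' x y p = ∑ i, ∑ j, ∑ e, x i * y j * (Φ i j e * g' e p) := by
  simp [quantumMul, Basis.constr_apply_fintype, vecMul, dotProduct, mul_sum, mul_assoc]

lemma quantumMul_single_single [DecidableEq ι] (i j : ι) :
    quantumMul Φ g' (Pi.single i 1) (Pi.single j 1) = Φ i j ᵥ* of g' := by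
  rw [← Pi.basisFun_apply, ← Pi.basisFun_apply, quantumMul, Basis.constr_basis, Basis.constr_basis]

lemma quantumMul_single_right [DecidableEq ι] (x : ι → K) (k : ι) :
    quantumMul Φ g' x (Pi.single k 1) = (x ᵥ* of fun f l => Φ f k l) ᵥ* of g' := by
  have linear_eq : (quantumMul Φ g').flip (Pi.single k 1) =
      (of g').vecMulLinear ∘ₗ (of fun f l => Φ f k l).vecMulLinear :=
    (Pi.basisFun K ι).ext fun i => by simp [quantumMul_single_single]
  exact LinearMap.congr_fun linear_eq x

lemma quantumMul_comm (hΦ : ∀ i j k, Φ i j k = Φ j i k) (x y : ι → K) :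
    quantumMul Φ g' x y = quantumMul Φ g' y x := by
  classical
  have eq_flip : quantumMul Φ g' = (quantumMul Φ g').flip :=
    LinearMap.ext_basis (Pi.basisFun K ι) (Pi.basisFun K ι) fun i j => by
      simp only [Pi.basisFun_apply, LinearMap.flip_apply, quantumMul_single_single,
        funext (hΦ i j)]
  exact LinearMap.congr_fun₂ eq_flip x y

lemma quantumMul_right_comm (h : SatisfiesWDVV Φ g') (x y z : ι → K) :
    quantumMul Φ g' (quantumMul Φ g' x y) z = quantumMul Φ g' (quantumMul Φ g' x z) y := by
  classical
  refine bilin_right_comm_of_basis (Pi.basisFun K ι) _ (fun i j k => ?_) x y z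
  simp only [Pi.basisFun_apply]
  calc quantumMul Φ g' (quantumMul Φ g' (Pi.single i 1) (Pi.single j 1)) (Pi.single k 1)
      = ((Φ i j ᵥ* of g') ᵥ* of fun f l => Φ f k l) ᵥ* of g' := by
        rw [quantumMul_single_single, quantumMul_single_right]
    _ = ((Φ i k ᵥ* of g') ᵥ* of fun f l => Φ f j l) ᵥ* of g' := by
        rw [h.vecMul_vecMul_comm]
    _ = quantumMul Φ g' (quantumMul Φ g' (Pi.single i 1) (Pi.single k 1)) (Pi.single j 1) := by
        rw [quantumMul_single_single, quantumMul_single_right]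

lemma quantumMul_assoc (hΦ : ∀ i j k, Φ i j k = Φ j i k) (h : SatisfiesWDVV Φ g')
    (x y z : ι → K) :
    quantumMul Φ g' (quantumMul Φ g' x y) z = quantumMul Φ g' x (quantumMul Φ g' y z) :=
  calc quantumMul Φ g' (quantumMul Φ g' x y) z
      = quantumMul Φ g' (quantumMul Φ g' y x) z := by rw [quantumMul_comm hΦ x y]
    _ = quantumMul Φ g' (quantumMul Φ g' y z) x := quantumMul_right_comm h y x z
    _ = quantumMul Φ g' x (quantumMul Φ g' y z) := quantumMul_comm hΦ _ _

lemma single_quantumMul [DecidableEq ι] {i₀ : ι}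
    (h : ∀ i f, (∑ e, Φ i₀ i e * g' e f) = if i = f then (1 : K) else 0) (x : ι → K) :
    quantumMul Φ g' (Pi.single i₀ 1) x = x := by
  have eq_id : quantumMul Φ g' (Pi.single i₀ 1) = LinearMap.id :=
    (Pi.basisFun K ι).ext fun j => by
      ext p
      simp [quantumMul_single_single, vecMul, dotProduct, h, Pi.single_apply, eq_comm]
  exact LinearMap.congr_fun eq_id x

end

theorem quantum_cohomology_comm_assoc_algebra_general
    {K : Type*} [CommSemiring K] {ι : Type*} [Fintype ι] [DecidableEq ι]
    (g g' : ι → ι → K)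
    (hgg' : ∀ i f, (∑ e, g i e * g' e f) = if i = f then (1 : K) else 0)
    (Φ : ι → ι → ι → K)
    (hΦ : ∀ i j k, Φ i j k = Φ j i k)
    (T : ι → (ι → K)) (hT : ∀ i, T i = Pi.single i 1)
    (qmul : (ι → K) → (ι → K) → (ι → K))
    (hqmul : ∀ x y p, qmul x y p = ∑ i, ∑ j, ∑ e, x i * y j * (Φ i j e * g' e p))
    (WDVV : ∀ i j k l,
      (∑ e, ∑ f, Φ i j e * g' e f * Φ f k l) = ∑ e, ∑ f, Φ i k e * g' e f * Φ f j l)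
    (i₀ : ι) (hΦ₀ : ∀ i j, Φ i₀ i j = g i j) :
    (∀ (c : K) (x y z : ι → K),
        qmul (c • x + y) z = c • qmul x z + qmul y z ∧
        qmul z (c • x + y) = c • qmul z x + qmul z y) ∧
    (∀ x y : ι → K, qmul x y = qmul y x) ∧
    (∀ x y z : ι → K, qmul (qmul x y) z = qmul x (qmul y z)) ∧
    (∀ x : ι → K, qmul (T i₀) x = x ∧ qmul x (T i₀) = x) := by
  obtain rfl : qmul = fun x y => quantumMul Φ g' x y := by
    ext x y p
    rw [hqmul, quantumMul_apply]
  have unit_mul (x : ι → K) : quantumMul Φ g' (T i₀) x = x := by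
    rw [hT, single_quantumMul fun i f => by simpa only [hΦ₀] using hgg' i f]
  refine ⟨fun c x y z => ⟨?_, ?_⟩, quantumMul_comm hΦ, quantumMul_assoc hΦ WDVV,
    fun x => ⟨unit_mul x, ?_⟩⟩
  · simp only [map_add, map_smul, LinearMap.add_apply, LinearMap.smul_apply]
  · simp only [map_add, map_smul]
  · exact (quantumMul_comm hΦ x (T i₀)).trans (unit_mul x)

/-- **The quantum cohomology algebra.**
With `g` symmetric with two-sided inverse `g'`, `Φ` totally symmetric satisfying
the WDVV equation, and `qmul` the bilinear quantum product determined by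
`T i * T j = ∑ e f, Φ i j e * g' e f • T f` on the standard basis
`T i = Pi.single i 1`: if a distinguished index `i₀` satisfies
`Φ i₀ i j = g i j` for all `i j`, then the free `K`-module `ι → K` equipped with
`qmul` is a commutative, associative `K`-algebra with multiplicative identity
`T i₀`: `qmul` is `K`-bilinear, commutative, associative and has unit `T i₀`. -/
theorem quantum_cohomology_comm_assoc_algebra
    {K : Type*} [CommRing K] {ι : Type*} [Fintype ι] [DecidableEq ι]
    (g g' : ι → ι → K)
    (hg : ∀ i j, g i j = g j i)
    (hgg' : ∀ i f, (∑ e, g i e * g' e f) = if i = f then (1 : K) else 0)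
    (hg'g : ∀ i f, (∑ e, g' i e * g e f) = if i = f then (1 : K) else 0)
    (Φ : ι → ι → ι → K)
    (hΦ₁ : ∀ i j k, Φ i j k = Φ j i k)
    (hΦ₂ : ∀ i j k, Φ i j k = Φ i k j)
    (T : ι → (ι → K)) (hT : ∀ i, T i = Pi.single i 1)
    (qmul : (ι → K) → (ι → K) → (ι → K))
    (hqmul : ∀ x y p, qmul x y p = ∑ i, ∑ j, ∑ e, x i * y j * (Φ i j e * g' e p))
    (WDVV : ∀ i j k l,
      (∑ e, ∑ f, Φ i j e * g' e f * Φ f k l) = ∑ e, ∑ f, Φ i k e * g' e f * Φ f j l)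
    (i₀ : ι) (hΦ₀ : ∀ i j, Φ i₀ i j = g i j) :
    (∀ (c : K) (x y z : ι → K),
        qmul (c • x + y) z = c • qmul x z + qmul y z ∧
        qmul z (c • x + y) = c • qmul z x + qmul z y) ∧
    (∀ x y : ι → K, qmul x y = qmul y x) ∧
    (∀ x y z : ι → K, qmul (qmul x y) z = qmul x (qmul y z)) ∧
    (∀ x : ι → K, qmul (T i₀) x = x ∧ qmul x (T i₀) = x) :=
  quantum_cohomology_comm_assoc_algebra_general g g' hgg' Φ hΦ₁ T hT qmul hqmul WDVV i₀ hΦ₀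
end

section
/- Define T^{ij} := T_{3−i,2−j} − T_{4−i,1−j} + T_{5−i,−j} in R, with the convention that T_{pq} = 0 whenever p > 3 or q < 0. Then {T^{ij}} is the dual basis of {T_{ij}} with respect to the Poincaré pairing: for all 0 ≤ i, k ≤ 3 and 0 ≤ j, l ≤ 2, ⟨T_{ij}, T^{kl}⟩ = 1 if (i,j) = (k,l) and 0 otherwise. -/
/-!
Over `ℚ[a]` the ring `R` is generated by the class `h` of `H`, a root of the monic polynomial
`f = H³ - aH² + a²H - a³`. Let `q_l` be the quotient of `f` by `H^(l+1)`. For a monic `f` of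
degree `d + 1`, each product `h^j * q_l(h)` with `j, l ≤ d` is a polynomial in `h` of degree at most
`d` whose `h^d`-coefficient is `1` if `j = l` and `0` otherwise: for `j ≤ l` it is read off from
`H^j * q_l`, and for `j > l` one first replaces `H^(l+1) * q_l = f - f mod H^(l+1)` by
`-(f mod H^(l+1))`. Hence the `q_l(h)` are dual to the powers of `h`, the powers `a^(3-k)` are dual
to the `a^k`, and `Tdual k l` is the product `a^(3-k) * q_l(h)`.
-/

open MvPolynomial

noncomputable section

/-- The polynomial ring `ℚ[a, H]` in two variables. -/
abbrev P : Type := MvPolynomial (Fin 2) ℚ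

/-- The variable `a` (hyperplane class of the Grassmannian). -/
def aP : P := X 0

/-- The variable `H` (pullback of the hyperplane class of `ℙ³`). -/
def HP : P := X 1

/-- The ideal `(a⁴, H³ − aH² + a²H − a³)`. -/
def J : Ideal P := Ideal.span {aP ^ 4, HP ^ 3 - aP * HP ^ 2 + aP ^ 2 * HP - aP ^ 3}

/-- The cohomology ring `R = ℚ[a,H]/(a⁴, H³ − aH² + a²H − a³)`. -/
abbrev R : Type := P ⧸ J

/-- `T i j` is the image of `aⁱHʲ` in `R`. -/
def T (i j : ℕ) : R := Ideal.Quotient.mk J (aP ^ i * HP ^ j)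

/-- `Tz p q` is the image of `aᵖHᑫ` in `R` for integer exponents, with the
convention that it is `0` whenever `p > 3` or `q < 0`. -/
def Tz (p q : ℤ) : R :=
  if 3 < p ∨ q < 0 then 0 else Ideal.Quotient.mk J (aP ^ p.toNat * HP ^ q.toNat)

/-- `Tdual i j = T_{3−i,2−j} − T_{4−i,1−j} + T_{5−i,−j}` (with the convention
`T_{pq} = 0` for `p > 3` or `q < 0`). -/
def Tdual (i j : ℕ) : R :=
  Tz (3 - (i : ℤ)) (2 - (j : ℤ)) - Tz (4 - (i : ℤ)) (1 - (j : ℤ))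
    + Tz (5 - (i : ℤ)) (-(j : ℤ))

open scoped Polynomial

section HornerDuality

variable {A S M : Type*}

section Coefficients

variable [Ring A]

theorem coeff_modByMonic_X_pow_of_le (f : A[X]) {n m : ℕ} (h : n ≤ m) :
    (f %ₘ Polynomial.X ^ n).coeff m = 0 := by
  nontriviality A
  have hdeg := Polynomial.degree_modByMonic_lt f (Polynomial.monic_X_pow n)
  rw [Polynomial.degree_X_pow] at hdeg
  exact Polynomial.coeff_eq_zero_of_degree_lt (hdeg.trans_le (by exact_mod_cast h))

theorem coeff_divByMonic_X_pow (f : A[X]) (n m : ℕ) :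
    (f /ₘ Polynomial.X ^ n).coeff m = f.coeff (m + n) := by
  conv_rhs => rw [← Polynomial.modByMonic_add_div f (Polynomial.X ^ n)]
  rw [Polynomial.coeff_add, coeff_modByMonic_X_pow_of_le f (Nat.le_add_left n m), zero_add,
    Polynomial.coeff_X_pow_mul]

theorem natDegree_divByMonic_X_pow_le (f : A[X]) (n : ℕ) :
    (f /ₘ Polynomial.X ^ n).natDegree ≤ f.natDegree - n := by
  nontriviality A
  rw [Polynomial.natDegree_divByMonic f (Polynomial.monic_X_pow n), Polynomial.natDegree_X_pow]

theorem eval₂_divByMonic_X_pow [Semiring S] (g : A →+* S) (x : S) {f : A[X]} {n m : ℕ}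
    (hf : f.natDegree ≤ n + m) :
    (f /ₘ Polynomial.X ^ n).eval₂ g x =
      ∑ i ∈ Finset.range (m + 1), g (f.coeff (i + n)) * x ^ i := by
  have hq : (f /ₘ Polynomial.X ^ n).natDegree < m + 1 := by
    have := natDegree_divByMonic_X_pow_le f n
    omega
  simp only [Polynomial.eval₂_eq_sum_range' g hq, coeff_divByMonic_X_pow]

end Coefficients

theorem map_mul_eval₂_eq_map_coeff_mul_pow [Semiring A] [Semiring S] [AddCommMonoid M]
    (g : A →+* S) (x : S) (φ : S →+ M) {d : ℕ}
    (hφ : ∀ c, ∀ j < d, φ (g c * x ^ j) = 0) (c : A) {p : A[X]} (hp : p.natDegree ≤ d) :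
    φ (g c * p.eval₂ g x) = φ (g (c * p.coeff d) * x ^ d) := by
  have hlow : ∑ j ∈ Finset.range d, φ (g c * (g (p.coeff j) * x ^ j)) = 0 :=
    Finset.sum_eq_zero fun j hj => by
      rw [← mul_assoc, ← map_mul, hφ _ j (Finset.mem_range.mp hj)]
  rw [p.eval₂_eq_sum_range' g (Nat.lt_succ_of_le hp), Finset.mul_sum, map_sum,
    Finset.sum_range_succ, hlow, zero_add, map_mul g, mul_assoc]

variable [CommRing A] [CommRing S]

theorem pow_mul_eval₂_divByMonic_X_pow (g : A →+* S) (x : S) {f : A[X]} (hroot : f.eval₂ g x = 0)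
    (n : ℕ) :
    x ^ n * (f /ₘ Polynomial.X ^ n).eval₂ g x = -(f %ₘ Polynomial.X ^ n).eval₂ g x := by
  have hdiv := congrArg (Polynomial.eval₂ g x)
    (Polynomial.modByMonic_add_div f (Polynomial.X ^ n))
  rw [Polynomial.eval₂_add, Polynomial.eval₂_mul, Polynomial.eval₂_X_pow, hroot] at hdiv
  exact eq_neg_of_add_eq_zero_right hdiv

theorem exists_eval₂_eq_pow_mul_eval₂_divByMonic (g : A →+* S) (x : S) {f : A[X]} (hf : f.Monic)
    (hroot : f.eval₂ g x = 0) {d : ℕ} (hd : f.natDegree = d + 1) {j l : ℕ} (hj : j ≤ d)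
    (hl : l ≤ d) :
    ∃ p : A[X], p.natDegree ≤ d ∧ p.coeff d = (if j = l then 1 else 0) ∧
      p.eval₂ g x = x ^ j * (f /ₘ Polynomial.X ^ (l + 1)).eval₂ g x := by
  rcases le_or_gt j l with hjl | hlj
  · refine ⟨Polynomial.X ^ j * (f /ₘ Polynomial.X ^ (l + 1)), ?_, ?_,
      by rw [Polynomial.eval₂_mul, Polynomial.eval₂_X_pow]⟩
    · have hq := natDegree_divByMonic_X_pow_le f (l + 1)
      refine Polynomial.natDegree_mul_le_of_le (Polynomial.natDegree_X_pow_le j) hq |>.trans ?_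
      omega
    · rw [Polynomial.coeff_X_pow_mul', if_pos hj, coeff_divByMonic_X_pow]
      split_ifs with hjl'
      · rw [show d - j + (l + 1) = f.natDegree by omega, hf.coeff_natDegree]
      · exact Polynomial.coeff_eq_zero_of_natDegree_lt (by omega)
  · obtain ⟨m, rfl⟩ := Nat.exists_eq_add_of_lt hlj
    refine ⟨-(Polynomial.X ^ m * (f %ₘ Polynomial.X ^ (l + 1))), ?_, ?_, ?_⟩
    · have hr := Polynomial.natDegree_modByMonic_le f (Polynomial.monic_X_pow (R := A) (l + 1))
      rw [Polynomial.natDegree_neg]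
      refine Polynomial.natDegree_mul_le_of_le (Polynomial.natDegree_X_pow_le m)
        (hr.trans (Polynomial.natDegree_X_pow_le _)) |>.trans ?_
      omega
    · rw [Polynomial.coeff_neg, Polynomial.coeff_X_pow_mul', if_pos (by omega),
        coeff_modByMonic_X_pow_of_le f (by omega), neg_zero, if_neg (by omega)]
    · rw [Polynomial.eval₂_neg, Polynomial.eval₂_mul, Polynomial.eval₂_X_pow, ← mul_neg,
        ← pow_mul_eval₂_divByMonic_X_pow g x hroot, ← mul_assoc, ← pow_add]
      congr 2
      omega

theorem map_mul_pow_mul_eval₂_divByMonic [AddCommMonoid M] (g : A →+* S) (x : S) {f : A[X]}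
    (hf : f.Monic) (hroot : f.eval₂ g x = 0) {d : ℕ} (hd : f.natDegree = d + 1)
    (φ : S →+ M) (hφ : ∀ c, ∀ j < d, φ (g c * x ^ j) = 0) (c : A) {j l : ℕ} (hj : j ≤ d)
    (hl : l ≤ d) :
    φ (g c * (x ^ j * (f /ₘ Polynomial.X ^ (l + 1)).eval₂ g x)) =
      if j = l then φ (g c * x ^ d) else 0 := by
  obtain ⟨p, hp, hcoeff, heval⟩ :=
    exists_eval₂_eq_pow_mul_eval₂_divByMonic g x hf hroot hd hj hl
  rw [← heval, map_mul_eval₂_eq_map_coeff_mul_pow g x φ hφ c hp, hcoeff]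
  split_ifs <;> simp

end HornerDuality

theorem aevalAeval_eq_eval₂ {K S : Type*} [CommSemiring K] [CommSemiring S] [Algebra K S] (a h : S)
    (f : K[X][X]) :
    Polynomial.aevalAeval a h f = f.eval₂ (Polynomial.aeval a : K[X] →ₐ[K] S).toRingHom h := by
  induction f using Polynomial.induction_on' with
  | add p q hp hq => rw [map_add, hp, hq, Polynomial.eval₂_add]
  | monomial n c => simp

theorem dual_basis_poincare_general {K S : Type*} [CommRing K] [CommRing S] [Algebra K S]
    {a h : S} {N d : ℕ} (ha : a ^ (N + 1) = 0) {f : K[X][X]} (hf : f.Monic)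
    (hd : f.natDegree = d + 1)
    (hroot : Polynomial.aevalAeval a h f = 0) (φ : S →ₗ[K] K)
    (hφ : ∀ i ≤ N, ∀ j ≤ d, φ (a ^ i * h ^ j) = if i = N ∧ j = d then 1 else 0)
    (i : ℕ) {k j l : ℕ} (hk : k ≤ N) (hj : j ≤ d) (hl : l ≤ d) :
    φ (a ^ i * h ^ j * (a ^ (N - k) * Polynomial.aevalAeval a h (f /ₘ Polynomial.X ^ (l + 1)))) =
      if i = k ∧ j = l then 1 else 0 := by
  have hmonomial (m n : ℕ) (hn : n ≤ d) : φ (a ^ m * h ^ n) = if m = N ∧ n = d then 1 else 0 := by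
    rcases le_or_gt m N with hm | hm
    · exact hφ m hm n hn
    · rw [pow_eq_zero_of_le hm ha, zero_mul, map_zero, if_neg (by omega)]
  have hlow (c : K[X]) (n : ℕ) (hn : n < d) : φ (Polynomial.aeval a c * h ^ n) = 0 := by
    induction c using Polynomial.induction_on' with
    | add p q hp hq => rw [map_add, add_mul, map_add, hp, hq, add_zero]
    | monomial m r =>
      rw [Polynomial.aeval_monomial, mul_assoc, ← Algebra.smul_def, map_smul, hmonomial m n hn.le,
        if_neg (by omega), smul_zero]
  have hexp : i + (N - k) = N ↔ i = k := by omega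
  rw [aevalAeval_eq_eval₂] at hroot ⊢
  have hdual := map_mul_pow_mul_eval₂_divByMonic _ h hf hroot hd φ.toAddMonoidHom hlow
    (Polynomial.X ^ (i + (N - k))) hj hl
  simp only [AlgHom.toRingHom_eq_coe, RingHom.coe_coe, LinearMap.toAddMonoidHom_coe, map_pow,
    Polynomial.aeval_X, hmonomial _ d le_rfl, and_true] at hdual
  rw [mul_mul_mul_comm, ← pow_add, AlgHom.toRingHom_eq_coe, hdual, ← ite_and]
  simp only [hexp, and_comm]

/-- The class of `a` in `R`. -/
def aR : R := Ideal.Quotient.mk J aP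

/-- The class of `H` in `R`. -/
def HR : R := Ideal.Quotient.mk J HP

theorem T_eq_pow_mul_pow (i j : ℕ) : T i j = aR ^ i * HR ^ j := by
  simp only [T, aR, HR, map_mul, map_pow]

theorem aR_pow_four : aR ^ 4 = 0 := by
  have hmem : aP ^ 4 ∈ J := Ideal.subset_span (by simp)
  rw [aR, ← map_pow, Ideal.Quotient.eq_zero_iff_mem.mpr hmem]

theorem T_eq_zero {i : ℕ} (hi : 4 ≤ i) (j : ℕ) : T i j = 0 := by
  rw [T_eq_pow_mul_pow, pow_eq_zero_of_le hi aR_pow_four, zero_mul]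

theorem Tz_eq_T {p q : ℤ} {m n : ℕ} (hp : p = m) (hq : q = n) : Tz p q = T m n := by
  subst hp hq
  unfold Tz
  split_ifs with h
  · exact (T_eq_zero (by omega) n).symm
  · simp [T]

theorem Tz_of_neg (p : ℤ) {q : ℤ} (hq : q < 0) : Tz p q = 0 := by
  simp [Tz, hq]

theorem Tdual_zero {k m : ℕ} (h : 3 = k + m) :
    Tdual k 0 = T m 2 - T (m + 1) 1 + T (m + 2) 0 := by
  unfold Tdual
  rw [Tz_eq_T (m := m) (n := 2), Tz_eq_T (m := m + 1) (n := 1), Tz_eq_T (m := m + 2) (n := 0)] <;>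
    omega

theorem Tdual_one {k m : ℕ} (h : 3 = k + m) : Tdual k 1 = T m 1 - T (m + 1) 0 := by
  unfold Tdual
  rw [Tz_eq_T (m := m) (n := 1), Tz_eq_T (m := m + 1) (n := 0), Tz_of_neg, add_zero] <;> omega

theorem Tdual_two {k m : ℕ} (h : 3 = k + m) : Tdual k 2 = T m 0 := by
  unfold Tdual
  rw [Tz_eq_T (m := m) (n := 0), Tz_of_neg, Tz_of_neg, add_zero, sub_zero] <;> omega

/-- The relation `H³ - aH² + a²H - a³` defining `R`, as a cubic in `H` with coefficients in `ℚ[a]`;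
the variable of the coefficient ring stands for `a`. -/
def relationCubic : Cubic ℚ[X] :=
  ⟨1, -Polynomial.X, Polynomial.X ^ 2, -Polynomial.X ^ 3⟩

theorem aevalAeval_relationCubic :
    Polynomial.aevalAeval aR HR relationCubic.toPoly = 0 := by
  have hmem : HP ^ 3 - aP * HP ^ 2 + aP ^ 2 * HP - aP ^ 3 ∈ J := Ideal.subset_span (by simp)
  have hrel := Ideal.Quotient.eq_zero_iff_mem.mpr hmem
  simp only [map_sub, map_add, map_mul, map_pow] at hrel
  simp only [relationCubic, Cubic.toPoly, map_add, map_mul, map_neg, map_pow, map_one,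
    Polynomial.aevalAeval_X, Polynomial.aevalAeval_Y, aR, HR]
  linear_combination hrel

theorem coeff_relationCubic {i : ℕ} (hi : i ≤ 3) :
    relationCubic.toPoly.coeff i = (-Polynomial.X) ^ (3 - i) := by
  interval_cases i <;> simp [relationCubic, Odd.neg_pow (by decide : Odd 3)]

theorem aevalAeval_relationCubic_divByMonic {l : ℕ} (hl : l ≤ 2) :
    Polynomial.aevalAeval aR HR (relationCubic.toPoly /ₘ Polynomial.X ^ (l + 1)) =
      ∑ i ∈ Finset.range (3 - l), (-aR) ^ (2 - l - i) * HR ^ i := by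
  have hdeg : relationCubic.toPoly.natDegree ≤ l + 1 + (2 - l) := by
    rw [Cubic.natDegree_of_a_ne_zero one_ne_zero]
    omega
  rw [aevalAeval_eq_eval₂, eval₂_divByMonic_X_pow _ _ hdeg, show 2 - l + 1 = 3 - l by omega]
  refine Finset.sum_congr rfl fun i hi => ?_
  rw [Finset.mem_range] at hi
  rw [coeff_relationCubic (by omega), show 3 - (i + (l + 1)) = 2 - l - i by omega]
  simp

theorem Tdual_eq_pow_mul_sum {k l : ℕ} (hk : k ≤ 3) (hl : l ≤ 2) :
    Tdual k l = aR ^ (3 - k) * ∑ i ∈ Finset.range (3 - l), (-aR) ^ (2 - l - i) * HR ^ i := by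
  obtain ⟨m, hm⟩ := Nat.exists_eq_add_of_le hk
  rw [show 3 - k = m by omega]
  interval_cases l
  · simp only [Tdual_zero hm, T_eq_pow_mul_pow, Finset.sum_range_succ, Finset.sum_range_zero,
      Nat.reduceSub]
    ring
  · simp only [Tdual_one hm, T_eq_pow_mul_pow, Finset.sum_range_succ, Finset.sum_range_zero,
      Nat.reduceSub]
    ring
  · simp [Tdual_two hm, T_eq_pow_mul_pow]

/-- **The elements `Tdual i j` form the dual basis of `{T i j}` with respect to
the Poincaré pairing:** `⟨T i j, Tdual k l⟩ = 1` if `(i,j) = (k,l)` and `0`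
otherwise. -/
theorem dual_basis_poincare
    (hli : LinearIndependent ℚ (fun p : Fin 4 × Fin 3 => T p.1.val p.2.val))
    (hsp : Submodule.span ℚ (Set.range fun p : Fin 4 × Fin 3 => T p.1.val p.2.val) = ⊤)
    (Int : R →ₗ[ℚ] ℚ)
    (hInt : ∀ i j, i ≤ 3 → j ≤ 2 →
      Int (T i j) = if i = 3 ∧ j = 2 then 1 else 0) :
    ∀ i k j l, i ≤ 3 → k ≤ 3 → j ≤ 2 → l ≤ 2 →
      Int (T i j * Tdual k l) = if i = k ∧ j = l then 1 else 0 := by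
  intro i k j l _ hk hj hl
  rw [T_eq_pow_mul_pow, Tdual_eq_pow_mul_sum hk hl, ← aevalAeval_relationCubic_divByMonic hl]
  exact dual_basis_poincare_general aR_pow_four (Cubic.monic_of_a_eq_one rfl)
    (Cubic.natDegree_of_a_ne_zero one_ne_zero) aevalAeval_relationCubic Int
    (fun m hm n hn => by rw [← T_eq_pow_mul_pow, hInt m n hm hn]) i hk hj hl

end
end
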